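/- arXiv:1511.07585 — 6 statements merged into one kernel-verified Lean document; each statement's English description precedes it below -/
import Mathlib

section
/- (Theorem 1, necessity direction.) Consider the parameterized control system ẋ = g(x, u(t), p(t)) where g : ℝⁿ × ℝᵐ × ℝᵖ → ℝⁿ is continuously differentiable and Lipschitz continuous in its first argument uniformly in the others. Suppose the system is monotone parameterized with respect to p: for every t ≥ 0, every piecewise continuous control u, all piecewise continuous parameter functions p₁ ≤ p₂ pointwise on [0,t], and all initial conditions y₁ ≤ y₂ componentwise, the corresponding solutions satisfy x₁(t) ≤ x₂(t) componentwise. Then at every point (x,u,p) ∈ ℝⁿ × ℝᵐ × ℝᵖ the Jacobian ∇ₓg is Metzler (∂gᵢ/∂xⱼ(x,u,p) ≥ 0 for all i ≠ j) and the Jacobian ∇ₚg is entrywise nonnegative (∂gᵢ/∂pₖ(x,u,p) ≥ 0 for all i, k). -/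
open Set

/-- A function is piecewise continuous on a set if it is continuous off a finite set of points. -/
def PiecewiseContinuousOn {E : Type*} [TopologicalSpace E] (f : ℝ → E) (s : Set ℝ) : Prop :=
  ∃ D : Finset ℝ, ContinuousOn f (s \ (D : Set ℝ))

/-- Theorem 1 (necessity): if the parameterized control system `ẋ = g(x, u(t), p(t))` is
monotone parameterized with respect to `p`, then at every point the state Jacobian of `g` is
Metzler and the parameter Jacobian of `g` is entrywise nonnegative. -/
theorem metzler_and_nonneg_of_monotone_parameterized
    (n m d : ℕ)
    (g : (Fin n → ℝ) → (Fin m → ℝ) → (Fin d → ℝ) → (Fin n → ℝ))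
    (hg : ContDiff ℝ 1
      (fun z : (Fin n → ℝ) × (Fin m → ℝ) × (Fin d → ℝ) => g z.1 z.2.1 z.2.2))
    (K : NNReal)
    (hLip : ∀ (u : Fin m → ℝ) (q : Fin d → ℝ), LipschitzWith K (fun x => g x u q))
    (hmono : ∀ t : ℝ, 0 ≤ t →
      ∀ u : ℝ → Fin m → ℝ, PiecewiseContinuousOn u (Icc 0 t) →
      ∀ p₁ p₂ : ℝ → Fin d → ℝ,
        PiecewiseContinuousOn p₁ (Icc 0 t) → PiecewiseContinuousOn p₂ (Icc 0 t) →
        (∀ s ∈ Icc 0 t, p₁ s ≤ p₂ s) →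
      ∀ x₁ x₂ : ℝ → Fin n → ℝ,
        (∀ s ∈ Icc 0 t, HasDerivAt x₁ (g (x₁ s) (u s) (p₁ s)) s) →
        (∀ s ∈ Icc 0 t, HasDerivAt x₂ (g (x₂ s) (u s) (p₂ s)) s) →
        x₁ 0 ≤ x₂ 0 → x₁ t ≤ x₂ t) :
    (∀ (x : Fin n → ℝ) (u : Fin m → ℝ) (q : Fin d → ℝ), ∀ i j : Fin n, i ≠ j →
      0 ≤ deriv (fun s : ℝ => g (Function.update x j s) u q i) (x j)) ∧
    (∀ (x : Fin n → ℝ) (u : Fin m → ℝ) (q : Fin d → ℝ), ∀ (i : Fin n) (k : Fin d),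
      0 ≤ deriv (fun s : ℝ => g x u (Function.update q k s) i) (q k)) := by
  have key : ∀ (x x' : Fin n → ℝ) (u : Fin m → ℝ) (q q' : Fin d → ℝ) (i : Fin n),
      x ≤ x' → q ≤ q' → x i = x' i → g x u q i ≤ g x' u q' i := by
    intro x x' u q q' i hx hq hxi
    have hC : ∀ (y : Fin n → ℝ) (r : Fin d → ℝ), ContDiffAt ℝ 1 (fun z => g z u r) y := by
      intro y r
      exact (hg.comp (contDiff_id.prodMk contDiff_const :
        ContDiff ℝ 1 (fun z : Fin n → ℝ => (z, (u, r))))).contDiffAt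
    obtain ⟨a, ha0, ε, hε, ha⟩ :=
      (hC x q).exists_forall_mem_closedBall_exists_eq_forall_mem_Ioo_hasDerivAt₀ 0
    obtain ⟨b, hb0, δ, hδ, hb⟩ :=
      (hC x' q').exists_forall_mem_closedBall_exists_eq_forall_mem_Ioo_hasDerivAt₀ 0
    have hle : ∀ t ∈ Ioo 0 (min ε δ), a t ≤ b t := by
      intro t ht
      have h1 := lt_of_lt_of_le ht.2 (min_le_left _ _)
      have h2 := lt_of_lt_of_le ht.2 (min_le_right _ _)
      refine hmono t ht.1.le (fun _ => u) ⟨∅, continuousOn_const⟩ (fun _ => q) (fun _ => q')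
        ⟨∅, continuousOn_const⟩ ⟨∅, continuousOn_const⟩ (fun _ _ => hq) a b
        (fun s hs => ha s ⟨by linarith [hs.1], by linarith [hs.2]⟩)
        (fun s hs => hb s ⟨by linarith [hs.1], by linarith [hs.2]⟩) ?_
      rw [ha0, hb0]
      exact hx
    have hA := hasDerivAt_pi.1 (ha 0 ⟨by linarith, by linarith⟩) i
    have hB := hasDerivAt_pi.1 (hb 0 ⟨by linarith, by linarith⟩) i
    rw [ha0] at hA
    rw [hb0] at hB
    have hD := (hB.sub hA).hasDerivWithinAt (s := Ioi 0)
    rw [hasDerivWithinAt_iff_tendsto_slope' self_notMem_Ioi] at hD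
    have h0 := ge_of_tendsto hD (b := 0) (by
      filter_upwards [Ioo_mem_nhdsGT (lt_min hε hδ)] with t ht
      have h3 := hle t ht i
      have h4 : 0 ≤ t⁻¹ := inv_nonneg.2 ht.1.le
      have : 0 ≤ t⁻¹ * (b t i - a t i) := mul_nonneg h4 (by linarith)
      simpa [slope_def_module, ha0, hb0, hxi] using this)
    linarith
  constructor
  · intro x u q i j hij
    refine Monotone.deriv_nonneg (fun s s' hs => key _ _ u q q i ?_ le_rfl ?_)
    · exact update_le_update_iff.2 ⟨hs, fun _ _ => le_rfl⟩
    · simp [Function.update_of_ne hij]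
  · intro x u q i k
    refine Monotone.deriv_nonneg (fun s s' hs => key x x u _ _ i le_rfl ?_ rfl)
    exact update_le_update_iff.2 ⟨hs, fun _ _ => le_rfl⟩
end

section
/- (Proposition 1: Monotonicity of nodal flow dynamics.) Suppose each dissipation function f_{ij}(t,u,v) is differentiable and strictly increasing in its last argument, i.e. ∂f_{ij}/∂v(t,u,v) > 0 for all (t,u,v), and suppose the right-hand side g(t,·,q(t)) is Lipschitz in ρ so that solutions are unique. Let q¹, q² : [0,T] → ℝ^V be continuous injection vectors and let ρ¹, ρ² : [0,T] → ℝ^V solve the nodal network flow dynamics with injections q¹ and q² respectively (with the same compression ratio functions ᾱ_{ij}, α̲_{ij}). If ρ¹(0) ≤ ρ²(0) componentwise and q¹(s) ≤ q²(s) componentwise for all s ∈ [0,t], then ρ¹(t) ≤ ρ²(t) componentwise. -/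
/-- Proposition 1 (monotonicity of nodal flow dynamics): if each dissipation function is
strictly increasing in its last argument and the right-hand side is Lipschitz in the state,
then ordered initial densities and pointwise-ordered injections yield ordered densities. -/
theorem nodal_dynamics_monotone_in_injections
    (V : Type*) [Fintype V] [DecidableEq V]
    (E : Finset (V × V))
    (hE_noloop : ∀ e ∈ E, e.1 ≠ e.2)
    (hE_inc : ∀ j : V, (∃ i, (i, j) ∈ E) ∨ (∃ k, (j, k) ∈ E))
    (ℓ T : ℝ) (hℓ : 0 < ℓ) (hT : 0 < T)
    -- compression ratio functions ᾱ (abar) and α̲ (aund), C¹ and strictly positive on [0,T]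
    (abar aund : V × V → ℝ → ℝ)
    (habar : ∀ e ∈ E, ContDiff ℝ 1 (abar e) ∧ ∀ t ∈ Set.Icc (0:ℝ) T, 0 < abar e t)
    (haund : ∀ e ∈ E, ContDiff ℝ 1 (aund e) ∧ ∀ t ∈ Set.Icc (0:ℝ) T, 0 < aund e t)
    -- differentiable dissipation functions f_{ij}(t,u,v)
    (f : V × V → ℝ → ℝ → ℝ → ℝ)
    (hf : ∀ e ∈ E, Differentiable ℝ (fun z : ℝ × ℝ × ℝ => f e z.1 z.2.1 z.2.2))
    -- aggregated nodal actuation α_j(t)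
    (A : V → ℝ → ℝ)
    (hA : ∀ (j : V) (t : ℝ), A j t =
      (∑ i ∈ Finset.univ.filter (fun i : V => (i, j) ∈ E), abar (i, j) t) +
      (∑ k ∈ Finset.univ.filter (fun k : V => (j, k) ∈ E), aund (j, k) t))
    -- the nodal network flow dynamics ρ̇_j = g_j(t, ρ, q)
    (g : ℝ → (V → ℝ) → (V → ℝ) → V → ℝ)
    (hg : ∀ (t : ℝ) (ρ qv : V → ℝ) (j : V), g t ρ qv j =
      (2 / (ℓ * A j t)) *
        ((∑ k ∈ Finset.univ.filter (fun k : V => (j, k) ∈ E),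
            f (j, k) t (aund (j, k) t * ρ j)
              ((abar (j, k) t * ρ k - aund (j, k) t * ρ j) / ℓ)) -
         (∑ i ∈ Finset.univ.filter (fun i : V => (i, j) ∈ E),
            f (i, j) t (abar (i, j) t * ρ j)
              ((abar (i, j) t * ρ j - aund (i, j) t * ρ i) / ℓ)) +
         qv j) -
      (deriv (A j) t / A j t) * ρ j)
    -- each dissipation function is strictly increasing in its last argument
    (hf_incr : ∀ e ∈ E, ∀ t ∈ Set.Icc (0:ℝ) T, ∀ u v : ℝ,
      0 < deriv (fun w : ℝ => f e t u w) v)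
    -- Lipschitz continuity of the right-hand side in ρ (solutions are unique)
    (K : NNReal)
    (hLip : ∀ t ∈ Set.Icc (0:ℝ) T, ∀ qv : V → ℝ, LipschitzWith K (fun ρ => g t ρ qv))
    -- two continuous injection profiles and corresponding solutions
    (q₁ q₂ : ℝ → V → ℝ) (hq₁ : Continuous q₁) (hq₂ : Continuous q₂)
    (ρ₁ ρ₂ : ℝ → V → ℝ)
    (hρ₁ : ∀ s ∈ Set.Icc (0:ℝ) T, HasDerivAt ρ₁ (g s (ρ₁ s) (q₁ s)) s)
    (hρ₂ : ∀ s ∈ Set.Icc (0:ℝ) T, HasDerivAt ρ₂ (g s (ρ₂ s) (q₂ s)) s)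
    (t : ℝ) (ht : t ∈ Set.Icc (0:ℝ) T)
    (h0 : ρ₁ 0 ≤ ρ₂ 0)
    (hq : ∀ s ∈ Set.Icc 0 t, q₁ s ≤ q₂ s) :
    ρ₁ t ≤ ρ₂ t := by
  -- quasi-monotonicity of the right-hand side
  have kamke : ∀ s ∈ Set.Icc (0:ℝ) T, ∀ (x y p r : V → ℝ) (j : V), x ≤ y → x j = y j → p ≤ r →
      g s x p j ≤ g s y r j := by
    intro s hs x y p r j hxy hj hpr
    have hA0 : 0 ≤ A j s := by
      rw [hA]
      refine add_nonneg (Finset.sum_nonneg ?_) (Finset.sum_nonneg ?_)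
      · intro i hi
        exact ((habar _ (Finset.mem_filter.1 hi).2).2 s hs).le
      · intro i hi
        exact ((haund _ (Finset.mem_filter.1 hi).2).2 s hs).le
    have hmono : ∀ e ∈ E, ∀ u, Monotone (fun w : ℝ => f e s u w) := fun e he u =>
      (strictMono_of_deriv_pos (hf_incr e he s hs u)).monotone
    rw [hg, hg, hj]
    have hc : 0 ≤ 2 / (ℓ * A j s) := by positivity
    refine sub_le_sub_right (mul_le_mul_of_nonneg_left ?_ hc) _
    refine add_le_add (sub_le_sub (Finset.sum_le_sum ?_) (Finset.sum_le_sum ?_)) (hpr j)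
    · intro k hk
      have hk' := (Finset.mem_filter.1 hk).2
      apply hmono _ hk'
      have := mul_le_mul_of_nonneg_left (hxy k) ((habar _ hk').2 s hs).le
      gcongr
    · intro i hi
      have hi' := (Finset.mem_filter.1 hi).2
      apply hmono _ hi'
      have := mul_le_mul_of_nonneg_left (hxy i) ((haund _ hi').2 s hs).le
      gcongr
  have key : ∀ ε > 0, ∀ s ∈ Set.Icc (0:ℝ) t, ∀ j,
      ρ₁ s j - ρ₂ s j - ε * Real.exp ((K + 1) * s) < 0 := by
    intro ε hε
    let φ : V → ℝ → ℝ := fun j s => ρ₁ s j - ρ₂ s j - ε * Real.exp ((K + 1) * s)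
    have hsub : ∀ s ∈ Set.Icc (0:ℝ) t, s ∈ Set.Icc (0:ℝ) T := fun s hs => ⟨hs.1, hs.2.trans ht.2⟩
    have hφ : ∀ j, ∀ s ∈ Set.Icc (0:ℝ) t, HasDerivAt (φ j)
        (g s (ρ₁ s) (q₁ s) j - g s (ρ₂ s) (q₂ s) j
          - ε * (Real.exp ((K + 1) * s) * (K + 1))) s := by
      intro j s hs
      have h1 := (hasDerivAt_pi.1 (hρ₁ s (hsub s hs))) j
      have h2 := (hasDerivAt_pi.1 (hρ₂ s (hsub s hs))) j
      have h3 : HasDerivAt (fun s : ℝ => Real.exp (((K:ℝ) + 1) * s))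
          (Real.exp (((K:ℝ) + 1) * s) * (K + 1)) s := by
        have := ((hasDerivAt_id s).const_mul ((K:ℝ) + 1)).exp
        simpa using this
      exact (h1.sub h2).sub (h3.const_mul ε)
    by_contra! hcon
    obtain ⟨s₀, hs₀, j₀, hj₀⟩ := hcon
    let S : Set ℝ := ⋃ j, (Set.Icc (0:ℝ) t ∩ (φ j) ⁻¹' Set.Ici 0)
    have hSc : IsCompact S := by
      apply isCompact_iUnion
      intro j
      refine isCompact_Icc.of_isClosed_subset ?_ Set.inter_subset_left
      exact ContinuousOn.preimage_isClosed_of_isClosed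
        (fun s hs => (hφ j s hs).continuousAt.continuousWithinAt) isClosed_Icc isClosed_Ici
    have hSne : S.Nonempty := ⟨s₀, Set.mem_iUnion.2 ⟨j₀, hs₀, hj₀⟩⟩
    obtain ⟨m, hmS, hmin⟩ := hSc.exists_isLeast hSne
    obtain ⟨j, hm, hjm⟩ := Set.mem_iUnion.1 hmS
    have hjm : 0 ≤ φ j m := hjm
    have hbefore : ∀ s ∈ Set.Ico (0:ℝ) m, ∀ i, φ i s < 0 := by
      intro s hs i
      by_contra! h
      have := hmin (Set.mem_iUnion.2 ⟨i, ⟨hs.1, hs.2.le.trans hm.2⟩, h⟩)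
      exact absurd hs.2 (not_lt.2 this)
    have hm0 : 0 < m := by
      rcases hm.1.lt_or_eq with h | h
      · exact h
      · exfalso
        have h' := h0 j
        simp only [φ, ← h, mul_zero, Real.exp_zero] at hjm
        linarith
    have hev : ∀ᶠ s in nhdsWithin m (Set.Iio m), s ∈ Set.Ico (0:ℝ) m :=
      Filter.mem_of_superset (Ioo_mem_nhdsLT hm0) Set.Ioo_subset_Ico_self
    have hle : ∀ i, φ i m ≤ 0 := by
      intro i
      refine le_of_tendsto ((hφ i m hm).continuousAt.tendsto.mono_left
        (nhdsWithin_le_nhds (s := Set.Iio m))) ?_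
      filter_upwards [hev] with s hs
      exact (hbefore s hs i).le
    set c := ε * Real.exp ((K + 1) * m) with hc
    have hcpos : 0 < c := by positivity
    have hmT := hsub m hm
    have hk := kamke m hmT (ρ₁ m) (fun i => ρ₂ m i + c) (q₁ m) (q₂ m) j
      (fun i => by have := hle i; simp only [φ, ← hc] at this; show ρ₁ m i ≤ ρ₂ m i + c; linarith)
      (by have := hle j; simp only [φ, ← hc] at this hjm; linarith) (hq m hm)
    have hl : g m (fun i => ρ₂ m i + c) (q₂ m) j - g m (ρ₂ m) (q₂ m) j ≤ K * c := by
      have h1 := (hLip m hmT (q₂ m)).dist_le_mul (fun i => ρ₂ m i + c) (ρ₂ m)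
      have h2 := dist_le_pi_dist (g m (fun i => ρ₂ m i + c) (q₂ m)) (g m (ρ₂ m) (q₂ m)) j
      have h3 : dist (fun i => ρ₂ m i + c) (ρ₂ m) ≤ c := by
        rw [dist_pi_le_iff hcpos.le]
        intro i
        simp [Real.dist_eq, abs_of_pos hcpos]
      have h4 := mul_le_mul_of_nonneg_left h3 K.coe_nonneg
      rw [Real.dist_eq] at h2
      exact (le_abs_self _).trans (h2.trans (h1.trans h4))
    have hneg : g m (ρ₁ m) (q₁ m) j - g m (ρ₂ m) (q₂ m) j
          - ε * (Real.exp ((K + 1) * m) * (K + 1)) < 0 := by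
      have : ε * (Real.exp ((K + 1) * m) * (K + 1)) = K * c + c := by rw [hc]; ring
      rw [this]; linarith
    have hslope := ((hasDerivAt_iff_tendsto_slope.1 (hφ j m hm)).mono_left
      (nhdsWithin_mono m (show Set.Iio m ⊆ {m}ᶜ from fun s hs => ne_of_lt hs))).eventually_lt_const hneg
    obtain ⟨s, hs1, hs2⟩ := (hslope.and hev).exists
    have h5 := hbefore s hs2 j
    rw [slope_def_field] at hs1
    have h6 : 0 ≤ (φ j s - φ j m) / (s - m) :=
      div_nonneg_of_nonpos (by linarith) (by linarith [hs2.2])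
    linarith
  intro j
  refine le_of_forall_pos_lt_add ?_
  intro δ hδ
  have := key (δ / Real.exp ((K + 1) * t)) (by positivity) t ⟨ht.1, le_rfl⟩ j
  rw [div_mul_cancel₀ _ (Real.exp_pos _).ne'] at this
  linarith
end

section
/- (Remark 3: sandwich property of nodal flow dynamics.) Suppose each dissipation function f_{ij}(t,u,v) is differentiable and strictly increasing in its last argument, i.e. ∂f_{ij}/∂v(t,u,v) > 0 for all (t,u,v), and suppose the right-hand side g(t,·,q(t)) is Lipschitz in ρ so that solutions are unique. Let q¹, q, q² : [0,T] → ℝ^V be continuous injection vectors and ρ¹, ρ, ρ² : [0,T] → ℝ^V the corresponding solutions of the nodal network flow dynamics (with the same compression ratio functions ᾱ_{ij}, α̲_{ij}). If ρ¹(0) ≤ ρ(0) ≤ ρ²(0) componentwise and q¹(s) ≤ q(s) ≤ q²(s) componentwise for all s ∈ [0,t], then ρ¹(t) ≤ ρ(t) ≤ ρ²(t) componentwise. -/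
/-- Kamke-type comparison lemma for quasi-monotone Lipschitz systems. -/
theorem kamke_comparison {V : Type*} [Fintype V]
    (G H : ℝ → (V → ℝ) → V → ℝ) (K : NNReal) (t : ℝ) (ht : 0 ≤ t)
    (hmono : ∀ s ∈ Set.Icc 0 t, ∀ (x w : V → ℝ) (j : V), x ≤ w → x j = w j →
      G s x j ≤ H s w j)
    (hLip : ∀ s ∈ Set.Icc 0 t, LipschitzWith K (H s))
    (x y : ℝ → V → ℝ)
    (hx : ∀ s ∈ Set.Icc 0 t, HasDerivAt x (G s (x s)) s)
    (hy : ∀ s ∈ Set.Icc 0 t, HasDerivAt y (H s (y s)) s)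
    (h0 : x 0 ≤ y 0) : x t ≤ y t := by
  have key : ∀ ε : ℝ, 0 < ε → ∀ s ∈ Set.Icc 0 t, ∀ j,
      x s j < y s j + ε * Real.exp ((K + 1) * s) := by
    intro ε hε
    by_contra! hcon
    set D : V → ℝ → ℝ := fun j s => x s j - (y s j + ε * Real.exp ((K + 1) * s)) with hD
    have hDd : ∀ s ∈ Set.Icc 0 t, ∀ j, HasDerivAt (D j)
        (G s (x s) j - (H s (y s) j + ε * (Real.exp ((K + 1) * s) * (K + 1)))) s := by
      intro s hs j
      have h1 := (hasDerivAt_pi.1 (hx s hs)) j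
      have h2 := (hasDerivAt_pi.1 (hy s hs)) j
      have h3 : HasDerivAt (fun s : ℝ => ((K : ℝ) + 1) * s) (K + 1) s := by
        simpa using (hasDerivAt_id s).const_mul ((K : ℝ) + 1)
      exact h1.sub (h2.add (h3.exp.const_mul ε))
    have hDc : ∀ j, ContinuousOn (D j) (Set.Icc 0 t) := fun j s hs =>
      (hDd s hs j).continuousAt.continuousWithinAt
    set B : Set ℝ := ⋃ j, (Set.Icc 0 t ∩ (D j) ⁻¹' Set.Ici 0) with hB
    have hBc : IsClosed B := isClosed_iUnion_of_finite fun j =>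
      (hDc j).preimage_isClosed_of_isClosed isClosed_Icc isClosed_Ici
    have hBn : B.Nonempty := by
      obtain ⟨s, hs, j, hj⟩ := hcon
      refine ⟨s, Set.mem_iUnion.2 ⟨j, hs, ?_⟩⟩
      simp only [hD, Set.mem_preimage, Set.mem_Ici]
      linarith
    have hBb : BddBelow B := ⟨0, by
      intro s hs
      obtain ⟨j, hj, -⟩ := Set.mem_iUnion.1 hs
      exact hj.1⟩
    have hmem := hBc.csInf_mem hBn hBb
    set s₀ := sInf B
    obtain ⟨j, hs₀, hj⟩ := Set.mem_iUnion.1 hmem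
    have hj : 0 ≤ D j s₀ := hj
    have hbefore : ∀ s, 0 ≤ s → s < s₀ → ∀ k, D k s < 0 := by
      intro s hs hlt k
      by_contra! hk
      exact absurd (csInf_le hBb (Set.mem_iUnion.2 ⟨k, ⟨hs, hlt.le.trans hs₀.2⟩, hk⟩))
        (not_le.2 hlt)
    have hpos : 0 < s₀ := by
      rcases hs₀.1.eq_or_lt with h | h
      · exfalso
        rw [← h] at hj
        simp only [hD, mul_zero, Real.exp_zero] at hj
        have := h0 j
        linarith
      · exact h
    have hev : ∀ᶠ s in nhdsWithin s₀ (Set.Iio s₀), ∀ k, D k s < 0 := by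
      filter_upwards [Ioo_mem_nhdsLT hpos] with s hs
      exact hbefore s hs.1.le hs.2
    have hle : ∀ k, D k s₀ ≤ 0 := by
      intro k
      have hc : Filter.Tendsto (D k) (nhdsWithin s₀ (Set.Iio s₀)) (nhds (D k s₀)) :=
        (hDd s₀ hs₀ k).continuousAt.tendsto.mono_left nhdsWithin_le_nhds
      exact le_of_tendsto hc (hev.mono fun s hs => (hs k).le)
    have hj0 : D j s₀ = 0 := le_antisymm (hle j) hj
    -- derivative is negative
    set δ := ε * Real.exp ((K + 1) * s₀) with hδ
    have hδpos : 0 < δ := mul_pos hε (Real.exp_pos _)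
    set w : V → ℝ := fun k => y s₀ k + δ with hw
    have hxw : x s₀ ≤ w := by
      intro k
      have := hle k
      simp only [hD] at this
      simp only [hw]
      linarith
    have hxj : x s₀ j = w j := by
      simp only [hD] at hj0
      simp only [hw]
      linarith
    have h1 := hmono s₀ hs₀ (x s₀) w j hxw hxj
    have h2 : H s₀ w j - H s₀ (y s₀) j ≤ K * δ := by
      have a1 := (hLip s₀ hs₀).dist_le_mul w (y s₀)
      have a2 : dist w (y s₀) ≤ δ := by
        refine (dist_pi_le_iff hδpos.le).2 fun k => ?_
        simp [hw, Real.dist_eq, abs_of_pos hδpos]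
      have a3 := dist_le_pi_dist (H s₀ w) (H s₀ (y s₀)) j
      rw [Real.dist_eq] at a3
      have a4 := mul_le_mul_of_nonneg_left a2 K.coe_nonneg
      linarith [le_abs_self (H s₀ w j - H s₀ (y s₀) j)]
    have hd := hDd s₀ hs₀ j
    have hneg : G s₀ (x s₀) j -
        (H s₀ (y s₀) j + ε * (Real.exp ((K + 1) * s₀) * (K + 1))) < 0 := by
      have : ε * (Real.exp ((K + 1) * s₀) * (K + 1)) = K * δ + δ := by rw [hδ]; ring
      rw [this]; linarith
    have hsl := (hasDerivAt_iff_tendsto_slope.1 hd).eventually (gt_mem_nhds hneg)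
    have hsl' : ∀ᶠ s in nhdsWithin s₀ (Set.Iio s₀), slope (D j) s₀ s < 0 :=
      hsl.filter_mono (nhdsWithin_mono _ fun s hs => ne_of_lt hs)
    obtain ⟨s, ⟨h3, h4⟩, h5⟩ := ((hsl'.and hev).and self_mem_nhdsWithin).exists
    have h5 : s < s₀ := h5
    rw [slope_def_field, hj0, sub_zero] at h3
    have := div_pos_of_neg_of_neg (h4 j) (sub_neg.2 h5)
    linarith
  intro j
  refine le_of_forall_pos_le_add fun η hη => ?_
  have := key (η / Real.exp ((K + 1) * t)) (div_pos hη (Real.exp_pos _)) t ⟨ht, le_rfl⟩ j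
  rw [div_mul_cancel₀ _ (Real.exp_pos _).ne'] at this
  exact this.le

/-- Remark 3 (sandwich property): a solution whose initial condition and injections are
sandwiched between those of two other solutions remains sandwiched componentwise. -/
theorem nodal_dynamics_sandwich
    (V : Type*) [Fintype V] [DecidableEq V]
    (E : Finset (V × V))
    (hE_noloop : ∀ e ∈ E, e.1 ≠ e.2)
    (hE_inc : ∀ j : V, (∃ i, (i, j) ∈ E) ∨ (∃ k, (j, k) ∈ E))
    (ℓ T : ℝ) (hℓ : 0 < ℓ) (hT : 0 < T)
    -- compression ratio functions ᾱ (abar) and α̲ (aund), C¹ and strictly positive on [0,T]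
    (abar aund : V × V → ℝ → ℝ)
    (habar : ∀ e ∈ E, ContDiff ℝ 1 (abar e) ∧ ∀ t ∈ Set.Icc (0:ℝ) T, 0 < abar e t)
    (haund : ∀ e ∈ E, ContDiff ℝ 1 (aund e) ∧ ∀ t ∈ Set.Icc (0:ℝ) T, 0 < aund e t)
    -- differentiable dissipation functions f_{ij}(t,u,v)
    (f : V × V → ℝ → ℝ → ℝ → ℝ)
    (hf : ∀ e ∈ E, Differentiable ℝ (fun z : ℝ × ℝ × ℝ => f e z.1 z.2.1 z.2.2))
    -- aggregated nodal actuation α_j(t)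
    (A : V → ℝ → ℝ)
    (hA : ∀ (j : V) (t : ℝ), A j t =
      (∑ i ∈ Finset.univ.filter (fun i : V => (i, j) ∈ E), abar (i, j) t) +
      (∑ k ∈ Finset.univ.filter (fun k : V => (j, k) ∈ E), aund (j, k) t))
    -- the nodal network flow dynamics ρ̇_j = g_j(t, ρ, q)
    (g : ℝ → (V → ℝ) → (V → ℝ) → V → ℝ)
    (hg : ∀ (t : ℝ) (ρ qv : V → ℝ) (j : V), g t ρ qv j =
      (2 / (ℓ * A j t)) *
        ((∑ k ∈ Finset.univ.filter (fun k : V => (j, k) ∈ E),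
            f (j, k) t (aund (j, k) t * ρ j)
              ((abar (j, k) t * ρ k - aund (j, k) t * ρ j) / ℓ)) -
         (∑ i ∈ Finset.univ.filter (fun i : V => (i, j) ∈ E),
            f (i, j) t (abar (i, j) t * ρ j)
              ((abar (i, j) t * ρ j - aund (i, j) t * ρ i) / ℓ)) +
         qv j) -
      (deriv (A j) t / A j t) * ρ j)
    -- each dissipation function is strictly increasing in its last argument
    (hf_incr : ∀ e ∈ E, ∀ t ∈ Set.Icc (0:ℝ) T, ∀ u v : ℝ,
      0 < deriv (fun w : ℝ => f e t u w) v)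
    -- Lipschitz continuity of the right-hand side in ρ (solutions are unique)
    (K : NNReal)
    (hLip : ∀ t ∈ Set.Icc (0:ℝ) T, ∀ qv : V → ℝ, LipschitzWith K (fun ρ => g t ρ qv))
    -- three continuous injection profiles and corresponding solutions
    (q₁ q q₂ : ℝ → V → ℝ) (hq₁ : Continuous q₁) (hqc : Continuous q) (hq₂ : Continuous q₂)
    (ρ₁ ρ ρ₂ : ℝ → V → ℝ)
    (hρ₁ : ∀ s ∈ Set.Icc (0:ℝ) T, HasDerivAt ρ₁ (g s (ρ₁ s) (q₁ s)) s)
    (hρ : ∀ s ∈ Set.Icc (0:ℝ) T, HasDerivAt ρ (g s (ρ s) (q s)) s)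
    (hρ₂ : ∀ s ∈ Set.Icc (0:ℝ) T, HasDerivAt ρ₂ (g s (ρ₂ s) (q₂ s)) s)
    (t : ℝ) (ht : t ∈ Set.Icc (0:ℝ) T)
    (h0 : ρ₁ 0 ≤ ρ 0 ∧ ρ 0 ≤ ρ₂ 0)
    (hq : ∀ s ∈ Set.Icc 0 t, q₁ s ≤ q s ∧ q s ≤ q₂ s) :
    ρ₁ t ≤ ρ t ∧ ρ t ≤ ρ₂ t := by
  have hfm : ∀ e ∈ E, ∀ s ∈ Set.Icc (0:ℝ) T, ∀ u : ℝ, Monotone (fun w => f e s u w) :=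
    fun e he s hs u => (strictMono_of_deriv_pos (hf_incr e he s hs u)).monotone
  have hmono : ∀ s ∈ Set.Icc (0:ℝ) T, ∀ (p p' x w : V → ℝ) (j : V), p ≤ p' → x ≤ w →
      x j = w j → g s x p j ≤ g s w p' j := by
    intro s hs p p' x w j hp hxw hj
    have hApos : 0 ≤ A j s := by
      rw [hA]
      refine add_nonneg (Finset.sum_nonneg fun i hi => ?_) (Finset.sum_nonneg fun i hi => ?_)
      · exact ((habar _ (Finset.mem_filter.1 hi).2).2 s hs).le
      · exact ((haund _ (Finset.mem_filter.1 hi).2).2 s hs).le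
    rw [hg, hg, hj]
    refine sub_le_sub_right (mul_le_mul_of_nonneg_left ?_ (by positivity)) _
    refine add_le_add (sub_le_sub (Finset.sum_le_sum fun k hk => ?_)
      (Finset.sum_le_sum fun i hi => ?_)) (hp j)
    · have he := (Finset.mem_filter.1 hk).2
      apply hfm _ he s hs
      have := mul_le_mul_of_nonneg_left (hxw k) ((habar _ he).2 s hs).le
      exact div_le_div_of_nonneg_right (by linarith) hℓ.le
    · have he := (Finset.mem_filter.1 hi).2
      apply hfm _ he s hs
      have := mul_le_mul_of_nonneg_left (hxw i) ((haund _ he).2 s hs).le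
      exact div_le_div_of_nonneg_right (by linarith) hℓ.le
  have hsub : ∀ s ∈ Set.Icc 0 t, s ∈ Set.Icc (0:ℝ) T := fun s hs => ⟨hs.1, hs.2.trans ht.2⟩
  constructor
  · exact kamke_comparison (fun s x => g s x (q₁ s)) (fun s x => g s x (q s)) K t ht.1
      (fun s hs x w j => hmono s (hsub s hs) _ _ x w j (hq s hs).1)
      (fun s hs => hLip s (hsub s hs) _) ρ₁ ρ
      (fun s hs => hρ₁ s (hsub s hs)) (fun s hs => hρ s (hsub s hs)) h0.1
  · exact kamke_comparison (fun s x => g s x (q s)) (fun s x => g s x (q₂ s)) K t ht.1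
      (fun s hs x w j => hmono s (hsub s hs) _ _ x w j (hq s hs).2)
      (fun s hs => hLip s (hsub s hs) _) ρ ρ₂
      (fun s hs => hρ s (hsub s hs)) (fun s hs => hρ₂ s (hsub s hs)) h0.2
end

section
/- (Intermediate claim in Corollary 1: positivity and Metzler structure under local feedback.) Suppose each dissipation function f_{ij}(t,u,v) is differentiable and strictly increasing in its last argument, i.e. ∂f_{ij}/∂v(t,u,v) > 0, and suppose the feedback gain functions satisfy v·k̲′_{ij}(v) + k̲_{ij}(v) > 0 and v·k̄′_{ij}(v) + k̄_{ij}(v) > 0 for all edges (i,j) ∈ E and all v ≥ 0. Then: (a) r_j(v) := k_j(v) + k_j′(v)·v > 0 for all nodes j and all v ≥ 0, where k_j(v) = Σ_{i∈∂₊j} k̄_{ij}(v) + Σ_{k∈∂₋j} k̲_{jk}(v); and (b) at every point (t,ρ,q) with ρ ∈ ℝ₊^V, the Jacobian of the closed-loop nodal dynamics with respect to ρ is Metzler (all off-diagonal partial derivatives ∂g_j/∂ρ_i, i ≠ j, are nonnegative) and the Jacobian with respect to q is entrywise nonnegative. -/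
theorem aux_sum {V : Type*} (S : Finset V) (F : V → ℝ → ℝ) (x : ℝ)
    (h : ∀ k ∈ S, ∃ d, 0 ≤ d ∧ HasDerivAt (F k) d x) :
    ∃ d, 0 ≤ d ∧ HasDerivAt (fun s => ∑ k ∈ S, F k s) d x := by
  choose! d hd hF using h
  exact ⟨∑ k ∈ S, d k, Finset.sum_nonneg hd, HasDerivAt.fun_sum hF⟩

/-- Intermediate claim in Corollary 1: under the feedback gain conditions, (a) the
denominators `r_j(v) = k_j(v) + k_j'(v)·v` are strictly positive on ℝ₊, and (b) on the
nonnegative orthant the Jacobian of the closed-loop nodal dynamics with respect to the state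
is Metzler and the Jacobian with respect to the injections is entrywise nonnegative. -/
theorem closed_loop_positivity_and_metzler
    (V : Type*) [Fintype V] [DecidableEq V]
    (E : Finset (V × V))
    (hE_noloop : ∀ e ∈ E, e.1 ≠ e.2)
    (hE_inc : ∀ j : V, (∃ i, (i, j) ∈ E) ∨ (∃ k, (j, k) ∈ E))
    (ℓ T : ℝ) (hℓ : 0 < ℓ) (hT : 0 < T)
    -- differentiable dissipation functions f_{ij}(t,u,v)
    (f : V × V → ℝ → ℝ → ℝ → ℝ)
    (hf : ∀ e ∈ E, Differentiable ℝ (fun z : ℝ × ℝ × ℝ => f e z.1 z.2.1 z.2.2))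
    -- each dissipation function is strictly increasing in its last argument
    (hf_incr : ∀ e ∈ E, ∀ t ∈ Set.Icc (0:ℝ) T, ∀ u v : ℝ,
      0 < deriv (fun w : ℝ => f e t u w) v)
    -- differentiable local feedback gain functions k̄ (kbar) and k̲ (kund), ℝ₊ → ℝ₊
    (kbar kund : V × V → ℝ → ℝ)
    (hkbar : ∀ e ∈ E, Differentiable ℝ (kbar e) ∧ ∀ v : ℝ, 0 ≤ v → 0 ≤ kbar e v)
    (hkund : ∀ e ∈ E, Differentiable ℝ (kund e) ∧ ∀ v : ℝ, 0 ≤ v → 0 ≤ kund e v)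
    -- the feedback gain conditions of Corollary 1
    (hgain : ∀ e ∈ E, ∀ v : ℝ, 0 ≤ v →
      0 < v * deriv (kund e) v + kund e v ∧ 0 < v * deriv (kbar e) v + kbar e v)
    -- aggregated gain k_j(v) and r_j(v) = k_j(v) + k_j'(v)·v
    (kagg : V → ℝ → ℝ)
    (hkagg : ∀ (j : V) (v : ℝ), kagg j v =
      (∑ i ∈ Finset.univ.filter (fun i : V => (i, j) ∈ E), kbar (i, j) v) +
      (∑ k ∈ Finset.univ.filter (fun k : V => (j, k) ∈ E), kund (j, k) v))
    (r : V → ℝ → ℝ)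
    (hr : ∀ (j : V) (v : ℝ), r j v = kagg j v + deriv (kagg j) v * v)
    -- the closed-loop nodal dynamics ρ̇_j = g_j(t, ρ, q)
    (g : ℝ → (V → ℝ) → (V → ℝ) → V → ℝ)
    (hg : ∀ (t : ℝ) (ρ qv : V → ℝ) (j : V), g t ρ qv j =
      (2 / (ℓ * r j (ρ j))) *
        ((∑ k ∈ Finset.univ.filter (fun k : V => (j, k) ∈ E),
            f (j, k) t (kund (j, k) (ρ j) * ρ j)
              ((kbar (j, k) (ρ k) * ρ k - kund (j, k) (ρ j) * ρ j) / ℓ)) -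
         (∑ i ∈ Finset.univ.filter (fun i : V => (i, j) ∈ E),
            f (i, j) t (kbar (i, j) (ρ j) * ρ j)
              ((kbar (i, j) (ρ j) * ρ j - kund (i, j) (ρ i) * ρ i) / ℓ)) +
         qv j))
    :
    (∀ (j : V) (v : ℝ), 0 ≤ v → 0 < r j v) ∧
    (∀ t ∈ Set.Icc (0:ℝ) T, ∀ ρ qv : V → ℝ, (∀ j : V, 0 ≤ ρ j) →
      (∀ j i : V, j ≠ i →
        0 ≤ deriv (fun s : ℝ => g t (Function.update ρ i s) qv j) (ρ i)) ∧
      (∀ j m : V,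
        0 ≤ deriv (fun s : ℝ => g t ρ (Function.update qv m s) j) (qv m))) := by
  have hra : ∀ (j : V) (v : ℝ), 0 ≤ v → 0 < r j v := by
    intro j v hv
    have hk : kagg j = fun v =>
      (∑ i ∈ Finset.univ.filter (fun i : V => (i, j) ∈ E), kbar (i, j) v) +
      (∑ k ∈ Finset.univ.filter (fun k : V => (j, k) ∈ E), kund (j, k) v) := funext (hkagg j)
    have hd : HasDerivAt (kagg j)
        ((∑ i ∈ Finset.univ.filter (fun i : V => (i, j) ∈ E), deriv (kbar (i, j)) v) +
        (∑ k ∈ Finset.univ.filter (fun k : V => (j, k) ∈ E), deriv (kund (j, k)) v)) v := by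
      rw [hk]
      refine HasDerivAt.add (HasDerivAt.fun_sum ?_) (HasDerivAt.fun_sum ?_)
      · intro i hi
        exact ((hkbar _ (Finset.mem_filter.1 hi).2).1 v).hasDerivAt
      · intro i hi
        exact ((hkund _ (Finset.mem_filter.1 hi).2).1 v).hasDerivAt
    have e : r j v =
        (∑ i ∈ Finset.univ.filter (fun i : V => (i, j) ∈ E),
          (v * deriv (kbar (i, j)) v + kbar (i, j) v)) +
        (∑ k ∈ Finset.univ.filter (fun k : V => (j, k) ∈ E),
          (v * deriv (kund (j, k)) v + kund (j, k) v)) := by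
      rw [hr, hd.deriv, hkagg]
      simp only [Finset.sum_add_distrib, ← Finset.mul_sum]
      ring
    have h1 : ∀ i ∈ Finset.univ.filter (fun i : V => (i, j) ∈ E),
        0 < v * deriv (kbar (i, j)) v + kbar (i, j) v := fun i hi =>
      (hgain _ (Finset.mem_filter.1 hi).2 v hv).2
    have h2 : ∀ k ∈ Finset.univ.filter (fun k : V => (j, k) ∈ E),
        0 < v * deriv (kund (j, k)) v + kund (j, k) v := fun i hi =>
      (hgain _ (Finset.mem_filter.1 hi).2 v hv).1
    rw [e]
    rcases hE_inc j with ⟨i, hi⟩ | ⟨k, hk⟩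
    · exact add_pos_of_pos_of_nonneg (Finset.sum_pos h1 ⟨i, by simpa using hi⟩)
        (Finset.sum_nonneg fun k hk => (h2 k hk).le)
    · exact add_pos_of_nonneg_of_pos (Finset.sum_nonneg fun k hk => (h1 k hk).le)
        (Finset.sum_pos h2 ⟨k, by simpa using hk⟩)
  refine ⟨hra, fun t ht ρ qv hρ => ?_⟩
  have hc : ∀ j, 0 ≤ 2 / (ℓ * r j (ρ j)) := fun j => by
    have := hra j (ρ j) (hρ j)
    positivity
  have hfd : ∀ e ∈ E, ∀ u v : ℝ,
      HasDerivAt (fun w : ℝ => f e t u w) (deriv (fun w : ℝ => f e t u w) v) v :=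
    fun e he u v =>
      (differentiableAt_of_deriv_ne_zero (hf_incr e he t ht u v).ne').hasDerivAt
  have hkd : ∀ (k : ℝ → ℝ) (x : ℝ), Differentiable ℝ k →
      HasDerivAt (fun s => k s * s) (x * deriv k x + k x) x := by
    intro k x hk
    have := (hk x).hasDerivAt.mul (hasDerivAt_id x)
    refine this.congr_deriv ?_
    simp [mul_comm]
  constructor
  · intro j i hji
    obtain ⟨d1, hd1, h1⟩ := aux_sum (Finset.univ.filter (fun k : V => (j, k) ∈ E))
      (fun k s => f (j, k) t (kund (j, k) (ρ j) * ρ j)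
        ((kbar (j, k) (Function.update ρ i s k) * Function.update ρ i s k
          - kund (j, k) (ρ j) * ρ j) / ℓ)) (ρ i) (by
        intro k hk
        have hk := (Finset.mem_filter.1 hk).2
        by_cases hki : k = i
        · subst hki
          simp only [Function.update_self]
          have hin := ((hkd _ (ρ k) (hkbar _ hk).1).sub_const
            (kund (j, k) (ρ j) * ρ j)).div_const ℓ
          have hcomp := (hfd _ hk (kund (j, k) (ρ j) * ρ j) _).comp (ρ k) hin
          exact ⟨_, mul_nonneg (hf_incr _ hk t ht _ _).le
            (div_nonneg (hgain _ hk _ (hρ k)).2.le hℓ.le), hcomp⟩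
        · simp only [Function.update_of_ne hki]
          exact ⟨0, le_rfl, hasDerivAt_const _ _⟩)
    obtain ⟨d2, hd2, h2⟩ := aux_sum (Finset.univ.filter (fun k : V => (k, j) ∈ E))
      (fun k s => - f (k, j) t (kbar (k, j) (ρ j) * ρ j)
        ((kbar (k, j) (ρ j) * ρ j
          - kund (k, j) (Function.update ρ i s k) * Function.update ρ i s k) / ℓ)) (ρ i) (by
        intro k hk
        have hk := (Finset.mem_filter.1 hk).2
        by_cases hki : k = i
        · subst hki
          simp only [Function.update_self]
          have hin := ((hkd _ (ρ k) (hkund _ hk).1).const_sub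
            (kbar (k, j) (ρ j) * ρ j)).div_const ℓ
          have hcomp := ((hfd _ hk (kbar (k, j) (ρ j) * ρ j) _).comp (ρ k) hin).neg
          refine ⟨_, ?_, hcomp⟩
          rw [← mul_neg, ← neg_div, neg_neg]
          exact mul_nonneg (hf_incr _ hk t ht _ _).le
            (div_nonneg (hgain _ hk _ (hρ k)).1.le hℓ.le)
        · simp only [Function.update_of_ne hki]
          exact ⟨0, le_rfl, hasDerivAt_const _ _⟩)
    have h3 := ((h1.add h2).add_const (qv j)).const_mul (2 / (ℓ * r j (ρ j)))
    have h4 : HasDerivAt (fun s : ℝ => g t (Function.update ρ i s) qv j)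
        (2 / (ℓ * r j (ρ j)) * (d1 + d2)) (ρ i) := by
      refine h3.congr_of_eventuallyEq (Filter.Eventually.of_forall fun s => ?_)
      simp only [Pi.add_apply]
      rw [hg, Finset.sum_neg_distrib, ← sub_eq_add_neg]
      simp only [Function.update_of_ne hji]
    rw [h4.deriv]
    exact mul_nonneg (hc j) (add_nonneg hd1 hd2)
  · intro j m
    simp only [hg]
    by_cases hjm : j = m
    · subst hjm
      simp only [Function.update_self]
      refine le_of_le_of_eq ?_
        (HasDerivAt.deriv (((hasDerivAt_id (qv j)).const_add _).const_mul _)).symm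
      simpa using hc j
    · simp only [Function.update_of_ne hjm]
      simp
end

section
/- (Robust feasibility under injection uncertainty, Section V.) Suppose each dissipation function f_{ij}(t,u,v) is differentiable and strictly increasing in its last argument, i.e. ∂f_{ij}/∂v(t,u,v) > 0, and suppose the right-hand side g(t,·,q(t)) is Lipschitz in ρ so that solutions are unique. Let q̲, q̄ : [0,T] → ℝ^V be continuous lower and upper injection bounds with solutions ρ̲ and ρ̄ of the nodal network flow dynamics (with the same compression ratio functions), and let ρ_min, ρ_max ∈ ℝ^V satisfy ρ_min ≤ ρ̲(t) and ρ̄(t) ≤ ρ_max componentwise for all t ∈ [0,T]. Then for every continuous injection vector q with q̲(t) ≤ q(t) ≤ q̄(t) componentwise for all t ∈ [0,T], and every initial condition ρ(0) with ρ̲(0) ≤ ρ(0) ≤ ρ̄(0) componentwise, the corresponding solution ρ satisfies ρ_min ≤ ρ(t) ≤ ρ_max componentwise for all t ∈ [0,T]. -/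
/-- A function negative on `[0,t)` and nonnegative at `t` has nonnegative derivative there. -/
theorem aux_deriv_nonneg (h : ℝ → ℝ) (h' t : ℝ) (ht : 0 < t) (hd : HasDerivAt h h' t)
    (hneg : ∀ s, 0 ≤ s → s < t → h s < 0) (h0 : 0 ≤ h t) : 0 ≤ h' := by
  by_contra hc
  push Not at hc
  have h1 := (hasDerivAt_iff_tendsto_slope.1 hd).eventually (gt_mem_nhds hc)
  have h2 : ∀ᶠ s in nhdsWithin t (Set.Iio t), slope h t s < 0 :=
    h1.filter_mono (nhdsWithin_mono t (fun s hs => ne_of_lt hs))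
  have h3 : ∀ᶠ s in nhdsWithin t (Set.Iio t), 0 < s :=
    (lt_mem_nhds ht).filter_mono nhdsWithin_le_nhds
  obtain ⟨s, ⟨hs1, hs2⟩, hs3⟩ := ((h2.and h3).and self_mem_nhdsWithin).exists
  have hs3' : s < t := hs3
  have h4 := hneg s hs2.le hs3'
  rw [slope_def_field] at hs1
  have : 0 < (h s - h t) / (s - t) := div_pos_of_neg_of_neg (by linarith) (by linarith)
  linarith

/-- Comparison principle for quasi-monotone Lipschitz systems. -/
theorem aux_comparison {V : Type*} [Fintype V] (T : ℝ)
    (g : ℝ → (V → ℝ) → (V → ℝ) → V → ℝ) (K : NNReal)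
    (hLip : ∀ t ∈ Set.Icc (0:ℝ) T, ∀ qv : V → ℝ, LipschitzWith K (fun ρ => g t ρ qv))
    (hmono : ∀ t ∈ Set.Icc (0:ℝ) T, ∀ (x y p q : V → ℝ) (j : V), x ≤ y → p ≤ q → x j = y j →
      g t x p j ≤ g t y q j)
    (x y p q : ℝ → V → ℝ)
    (hx : ∀ s ∈ Set.Icc (0:ℝ) T, HasDerivAt x (g s (x s) (p s)) s)
    (hy : ∀ s ∈ Set.Icc (0:ℝ) T, HasDerivAt y (g s (y s) (q s)) s)
    (hpq : ∀ s ∈ Set.Icc (0:ℝ) T, p s ≤ q s) (h0 : x 0 ≤ y 0) :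
    ∀ t ∈ Set.Icc (0:ℝ) T, x t ≤ y t := by
  have key : ∀ ε : ℝ, 0 < ε → ∀ t ∈ Set.Icc (0:ℝ) T, ∀ j,
      x t j - y t j - ε * Real.exp ((K + 1) * t) < 0 := by
    intro ε hε
    by_contra hc
    push Not at hc
    obtain ⟨t₀, ht₀, j₀, hj₀⟩ := hc
    let h : V → ℝ → ℝ := fun j t => x t j - y t j - ε * Real.exp ((K + 1) * t)
    have hd : ∀ j, ∀ t ∈ Set.Icc (0:ℝ) T, HasDerivAt (h j)
        (g t (x t) (p t) j - g t (y t) (q t) j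
          - ε * (Real.exp ((K + 1) * t) * (K + 1))) t := by
      intro j t ht
      have e1 := hasDerivAt_pi.1 (hx t ht) j
      have e2 := hasDerivAt_pi.1 (hy t ht) j
      have e3 : HasDerivAt (fun t : ℝ => ((K:ℝ) + 1) * t) ((K:ℝ) + 1) t := by
        simpa using (hasDerivAt_id t).const_mul ((K:ℝ) + 1)
      exact (e1.sub e2).sub (e3.exp.const_mul ε)
    have hcont : ∀ j, ContinuousOn (h j) (Set.Icc 0 T) := fun j t ht =>
      (hd j t ht).continuousAt.continuousWithinAt
    let S : Set ℝ := ⋃ j, (Set.Icc 0 T ∩ h j ⁻¹' Set.Ici 0)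
    have hSc : IsClosed S := isClosed_iUnion_of_finite fun j =>
      (hcont j).preimage_isClosed_of_isClosed isClosed_Icc isClosed_Ici
    have hSK : IsCompact S := isCompact_Icc.of_isClosed_subset hSc
      (Set.iUnion_subset fun j => Set.inter_subset_left)
    obtain ⟨t, htS, htl⟩ := hSK.exists_isLeast
      ⟨t₀, Set.mem_iUnion.2 ⟨j₀, ht₀, hj₀⟩⟩
    obtain ⟨j, ht, hj⟩ := Set.mem_iUnion.1 htS
    have hj' : 0 ≤ h j t := hj
    have hbef : ∀ i s, 0 ≤ s → s < t → h i s < 0 := by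
      intro i s hs hst
      by_contra hh
      push Not at hh
      have := htl (Set.mem_iUnion.2 ⟨i, ⟨hs, hst.le.trans ht.2⟩, hh⟩)
      linarith
    have htpos : 0 < t := by
      rcases ht.1.lt_or_eq with h1 | h1
      · exact h1
      · exfalso
        rw [← h1] at hj'
        have := h0 j
        simp only [h, mul_zero, Real.exp_zero, mul_one] at hj'
        linarith
    have hle : ∀ i, h i t ≤ 0 := by
      intro i
      have hct : Filter.Tendsto (h i) (nhdsWithin t (Set.Iio t)) (nhds (h i t)) :=
        (hd i t ht).continuousAt.tendsto.mono_left nhdsWithin_le_nhds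
      have h3 : ∀ᶠ s in nhdsWithin t (Set.Iio t), 0 < s :=
        (lt_mem_nhds htpos).filter_mono nhdsWithin_le_nhds
      refine le_of_tendsto hct ?_
      filter_upwards [h3, self_mem_nhdsWithin] with s hs1 hs2
      exact (hbef i s hs1.le hs2).le
    have hder := aux_deriv_nonneg (h j) _ t htpos (hd j t ht) (hbef j) hj'
    set w := ε * Real.exp ((K + 1) * t) with hw
    have hwpos : 0 < w := by positivity
    have hz1 : x t ≤ fun i => y t i + w := by
      intro i
      have : x t i - y t i - w ≤ 0 := hle i
      show x t i ≤ y t i + w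
      linarith
    have hz2 : x t j = y t j + w := by
      have e1 : x t j - y t j - w ≤ 0 := hle j
      have e2 : 0 ≤ x t j - y t j - w := hj'
      linarith
    have hm := hmono t ht (x t) (fun i => y t i + w) (p t) (q t) j hz1 (hpq t ht) hz2
    have hL := (hLip t ht (q t)).dist_le_mul (fun i => y t i + w) (y t)
    have hdist : dist (fun i => y t i + w) (y t) ≤ w := by
      refine (dist_pi_le_iff hwpos.le).2 fun i => ?_
      rw [Real.dist_eq]
      simp [abs_of_pos hwpos]
    have hL2 := (dist_le_pi_dist (g t (fun i => y t i + w) (q t)) (g t (y t) (q t)) j).trans hL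
    rw [Real.dist_eq] at hL2
    have hL3 := (le_abs_self _).trans hL2
    have hL4 : (K:ℝ) * dist (fun i => y t i + w) (y t) ≤ K * w :=
      mul_le_mul_of_nonneg_left hdist K.2
    have hww : ε * (Real.exp ((K + 1) * t) * (K + 1)) = K * w + w := by rw [hw]; ring
    linarith
  intro t ht j
  refine le_of_forall_pos_lt_add fun δ hδ => ?_
  have hk := key (δ / Real.exp ((K + 1) * t)) (by positivity) t ht j
  rw [div_mul_cancel₀ _ (Real.exp_pos _).ne'] at hk
  linarith

/-- Robust feasibility under injection uncertainty (Section V): if the solutions for the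
extreme injection profiles `q̲` and `q̄` respect the density bounds, then so does the
solution for any injection profile sandwiched between them, for any initial condition
sandwiched between the extreme initial conditions. -/
theorem robust_feasibility_under_injection_uncertainty
    (V : Type*) [Fintype V] [DecidableEq V]
    (E : Finset (V × V))
    (hE_noloop : ∀ e ∈ E, e.1 ≠ e.2)
    (hE_inc : ∀ j : V, (∃ i, (i, j) ∈ E) ∨ (∃ k, (j, k) ∈ E))
    (ℓ T : ℝ) (hℓ : 0 < ℓ) (hT : 0 < T)
    -- compression ratio functions ᾱ (abar) and α̲ (aund), C¹ and strictly positive on [0,T]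
    (abar aund : V × V → ℝ → ℝ)
    (habar : ∀ e ∈ E, ContDiff ℝ 1 (abar e) ∧ ∀ t ∈ Set.Icc (0:ℝ) T, 0 < abar e t)
    (haund : ∀ e ∈ E, ContDiff ℝ 1 (aund e) ∧ ∀ t ∈ Set.Icc (0:ℝ) T, 0 < aund e t)
    -- differentiable dissipation functions f_{ij}(t,u,v)
    (f : V × V → ℝ → ℝ → ℝ → ℝ)
    (hf : ∀ e ∈ E, Differentiable ℝ (fun z : ℝ × ℝ × ℝ => f e z.1 z.2.1 z.2.2))
    -- aggregated nodal actuation α_j(t)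
    (A : V → ℝ → ℝ)
    (hA : ∀ (j : V) (t : ℝ), A j t =
      (∑ i ∈ Finset.univ.filter (fun i : V => (i, j) ∈ E), abar (i, j) t) +
      (∑ k ∈ Finset.univ.filter (fun k : V => (j, k) ∈ E), aund (j, k) t))
    -- the nodal network flow dynamics ρ̇_j = g_j(t, ρ, q)
    (g : ℝ → (V → ℝ) → (V → ℝ) → V → ℝ)
    (hg : ∀ (t : ℝ) (ρ qv : V → ℝ) (j : V), g t ρ qv j =
      (2 / (ℓ * A j t)) *
        ((∑ k ∈ Finset.univ.filter (fun k : V => (j, k) ∈ E),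
            f (j, k) t (aund (j, k) t * ρ j)
              ((abar (j, k) t * ρ k - aund (j, k) t * ρ j) / ℓ)) -
         (∑ i ∈ Finset.univ.filter (fun i : V => (i, j) ∈ E),
            f (i, j) t (abar (i, j) t * ρ j)
              ((abar (i, j) t * ρ j - aund (i, j) t * ρ i) / ℓ)) +
         qv j) -
      (deriv (A j) t / A j t) * ρ j)
    -- each dissipation function is strictly increasing in its last argument
    (hf_incr : ∀ e ∈ E, ∀ t ∈ Set.Icc (0:ℝ) T, ∀ u v : ℝ,
      0 < deriv (fun w : ℝ => f e t u w) v)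
    -- Lipschitz continuity of the right-hand side in ρ (solutions are unique)
    (K : NNReal)
    (hLip : ∀ t ∈ Set.Icc (0:ℝ) T, ∀ qv : V → ℝ, LipschitzWith K (fun ρ => g t ρ qv))
    -- lower and upper injection bounds with corresponding solutions
    (qlo qhi : ℝ → V → ℝ) (hqlo : Continuous qlo) (hqhi : Continuous qhi)
    (ρlo ρhi : ℝ → V → ℝ)
    (hρlo : ∀ s ∈ Set.Icc (0:ℝ) T, HasDerivAt ρlo (g s (ρlo s) (qlo s)) s)
    (hρhi : ∀ s ∈ Set.Icc (0:ℝ) T, HasDerivAt ρhi (g s (ρhi s) (qhi s)) s)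
    -- density box constraints satisfied by the extreme solutions
    (ρmin ρmax : V → ℝ)
    (hbound_lo : ∀ t ∈ Set.Icc (0:ℝ) T, ρmin ≤ ρlo t)
    (hbound_hi : ∀ t ∈ Set.Icc (0:ℝ) T, ρhi t ≤ ρmax)
    -- an arbitrary sandwiched injection profile and its solution
    (q : ℝ → V → ℝ) (hqc : Continuous q)
    (hq : ∀ t ∈ Set.Icc (0:ℝ) T, qlo t ≤ q t ∧ q t ≤ qhi t)
    (ρ : ℝ → V → ℝ)
    (hρ : ∀ s ∈ Set.Icc (0:ℝ) T, HasDerivAt ρ (g s (ρ s) (q s)) s)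
    (h0 : ρlo 0 ≤ ρ 0 ∧ ρ 0 ≤ ρhi 0) :
    ∀ t ∈ Set.Icc (0:ℝ) T, ρmin ≤ ρ t ∧ ρ t ≤ ρmax := by
  have hfm : ∀ e ∈ E, ∀ t ∈ Set.Icc (0:ℝ) T, ∀ u : ℝ, Monotone (fun w : ℝ => f e t u w) :=
    fun e he t ht u => (strictMono_of_deriv_pos (hf_incr e he t ht u)).monotone
  have hApos : ∀ j, ∀ t ∈ Set.Icc (0:ℝ) T, 0 ≤ A j t := by
    intro j t ht
    rw [hA]
    refine add_nonneg (Finset.sum_nonneg fun i hi => ?_) (Finset.sum_nonneg fun i hi => ?_)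
    · exact ((habar _ (Finset.mem_filter.1 hi).2).2 t ht).le
    · exact ((haund _ (Finset.mem_filter.1 hi).2).2 t ht).le
  have hmono : ∀ t ∈ Set.Icc (0:ℝ) T, ∀ (x y p q : V → ℝ) (j : V), x ≤ y → p ≤ q → x j = y j →
      g t x p j ≤ g t y q j := by
    intro t ht x y p q j hxy hpq hj
    rw [hg, hg, hj]
    have hc : 0 ≤ 2 / (ℓ * A j t) := div_nonneg (by norm_num) (mul_nonneg hℓ.le (hApos j t ht))
    refine sub_le_sub_right (mul_le_mul_of_nonneg_left ?_ hc) _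
    refine add_le_add (sub_le_sub (Finset.sum_le_sum fun k hk => ?_)
      (Finset.sum_le_sum fun i hi => ?_)) (hpq j)
    · have he := (Finset.mem_filter.1 hk).2
      refine hfm _ he t ht _ ?_
      have := mul_le_mul_of_nonneg_left (hxy k) ((habar _ he).2 t ht).le
      exact div_le_div_of_nonneg_right (by linarith) hℓ.le
    · have he := (Finset.mem_filter.1 hi).2
      refine hfm _ he t ht _ ?_
      have := mul_le_mul_of_nonneg_left (hxy i) ((haund _ he).2 t ht).le
      exact div_le_div_of_nonneg_right (by linarith) hℓ.le
  intro t ht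
  exact ⟨(hbound_lo t ht).trans (aux_comparison T g K hLip hmono ρlo ρ qlo q hρlo hρ
      (fun s hs => (hq s hs).1) h0.1 t ht),
    (aux_comparison T g K hLip hmono ρ ρhi q qhi hρ hρhi
      (fun s hs => (hq s hs).2) h0.2 t ht).trans (hbound_hi t ht)⟩
end

section
/- (The worst-case cost is attained at an extreme injection profile, Section V.) Suppose each dissipation function f_{ij}(t,u,v) is differentiable and strictly increasing in its last argument, i.e. ∂f_{ij}/∂v(t,u,v) > 0, and suppose the right-hand side g(t,·,q(t)) is Lipschitz in ρ so that solutions are unique. Let L : [0,T] × ℝ^V → ℝ be a running cost such that for every t, L(t,·) is monotone nondecreasing with respect to the componentwise order on ℝ^V, and such that t ↦ L(t,ρ(t)) is integrable along the solutions considered. Let q̲, q̄ : [0,T] → ℝ^V be continuous with q̲(t) ≤ q̄(t) for all t, fix an initial condition ρ⁰ ∈ ℝ^V, and for any continuous injection q with q̲(t) ≤ q(t) ≤ q̄(t) for all t ∈ [0,T] let ρ^q denote the solution of the nodal network flow dynamics with injections q and ρ^q(0) = ρ⁰. Then for every such q, ∫₀ᵀ L(t, ρ^q(t)) dt ≤ ∫₀ᵀ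 L(t, ρ^{q̄}(t)) dt; i.e. the maximum of the cost over the uncertainty set [q̲, q̄] is attained at the upper bound q̄. -/
open MeasureTheory

/-- Worst-case cost is attained at the extreme injection profile (Section V): for a running
cost `L(t,·)` monotone nondecreasing in the state, the cost along the solution for any
injection profile in the uncertainty band `[q̲, q̄]` is at most the cost along the solution
for the upper bound `q̄`. -/
theorem worst_case_cost_attained_at_upper_injection
    (V : Type*) [Fintype V] [DecidableEq V]
    (E : Finset (V × V))
    (hE_noloop : ∀ e ∈ E, e.1 ≠ e.2)
    (hE_inc : ∀ j : V, (∃ i, (i, j) ∈ E) ∨ (∃ k, (j, k) ∈ E))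
    (ℓ T : ℝ) (hℓ : 0 < ℓ) (hT : 0 < T)
    -- compression ratio functions ᾱ (abar) and α̲ (aund), C¹ and strictly positive on [0,T]
    (abar aund : V × V → ℝ → ℝ)
    (habar : ∀ e ∈ E, ContDiff ℝ 1 (abar e) ∧ ∀ t ∈ Set.Icc (0:ℝ) T, 0 < abar e t)
    (haund : ∀ e ∈ E, ContDiff ℝ 1 (aund e) ∧ ∀ t ∈ Set.Icc (0:ℝ) T, 0 < aund e t)
    -- differentiable dissipation functions f_{ij}(t,u,v)
    (f : V × V → ℝ → ℝ → ℝ → ℝ)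
    (hf : ∀ e ∈ E, Differentiable ℝ (fun z : ℝ × ℝ × ℝ => f e z.1 z.2.1 z.2.2))
    -- aggregated nodal actuation α_j(t)
    (A : V → ℝ → ℝ)
    (hA : ∀ (j : V) (t : ℝ), A j t =
      (∑ i ∈ Finset.univ.filter (fun i : V => (i, j) ∈ E), abar (i, j) t) +
      (∑ k ∈ Finset.univ.filter (fun k : V => (j, k) ∈ E), aund (j, k) t))
    -- the nodal network flow dynamics ρ̇_j = g_j(t, ρ, q)
    (g : ℝ → (V → ℝ) → (V → ℝ) → V → ℝ)
    (hg : ∀ (t : ℝ) (ρ qv : V → ℝ) (j : V), g t ρ qv j =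
      (2 / (ℓ * A j t)) *
        ((∑ k ∈ Finset.univ.filter (fun k : V => (j, k) ∈ E),
            f (j, k) t (aund (j, k) t * ρ j)
              ((abar (j, k) t * ρ k - aund (j, k) t * ρ j) / ℓ)) -
         (∑ i ∈ Finset.univ.filter (fun i : V => (i, j) ∈ E),
            f (i, j) t (abar (i, j) t * ρ j)
              ((abar (i, j) t * ρ j - aund (i, j) t * ρ i) / ℓ)) +
         qv j) -
      (deriv (A j) t / A j t) * ρ j)
    -- each dissipation function is strictly increasing in its last argument
    (hf_incr : ∀ e ∈ E, ∀ t ∈ Set.Icc (0:ℝ) T, ∀ u v : ℝ,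
      0 < deriv (fun w : ℝ => f e t u w) v)
    -- Lipschitz continuity of the right-hand side in ρ (solutions are unique)
    (K : NNReal)
    (hLip : ∀ t ∈ Set.Icc (0:ℝ) T, ∀ qv : V → ℝ, LipschitzWith K (fun ρ => g t ρ qv))
    -- running cost, monotone nondecreasing in the state
    (L : ℝ → (V → ℝ) → ℝ)
    (hLmono : ∀ t ∈ Set.Icc (0:ℝ) T, ∀ ρa ρb : V → ℝ, ρa ≤ ρb → L t ρa ≤ L t ρb)
    -- injection uncertainty band
    (qlo qhi : ℝ → V → ℝ) (hqlo : Continuous qlo) (hqhi : Continuous qhi)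
    (hband : ∀ t ∈ Set.Icc (0:ℝ) T, qlo t ≤ qhi t)
    -- a sandwiched injection profile
    (q : ℝ → V → ℝ) (hqc : Continuous q)
    (hq : ∀ t ∈ Set.Icc (0:ℝ) T, qlo t ≤ q t ∧ q t ≤ qhi t)
    -- common initial condition and the solutions for q and for q̄
    (ρ0 : V → ℝ)
    (ρq ρqhi : ℝ → V → ℝ)
    (hρq : ∀ s ∈ Set.Icc (0:ℝ) T, HasDerivAt ρq (g s (ρq s) (q s)) s)
    (hρqhi : ∀ s ∈ Set.Icc (0:ℝ) T, HasDerivAt ρqhi (g s (ρqhi s) (qhi s)) s)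
    (h0q : ρq 0 = ρ0) (h0qhi : ρqhi 0 = ρ0)
    -- integrability of the running cost along the two solutions
    (hint_q : IntegrableOn (fun t => L t (ρq t)) (Set.Icc 0 T))
    (hint_qhi : IntegrableOn (fun t => L t (ρqhi t)) (Set.Icc 0 T)) :
    ∫ t in Set.Icc (0:ℝ) T, L t (ρq t) ≤ ∫ t in Set.Icc (0:ℝ) T, L t (ρqhi t) := by
  -- positivity of the aggregated actuation
  have hApos : ∀ j : V, ∀ t ∈ Set.Icc (0:ℝ) T, 0 < A j t := by
    intro j t ht
    rw [hA]
    have h1 : 0 ≤ ∑ i ∈ Finset.univ.filter (fun i : V => (i, j) ∈ E), abar (i, j) t :=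
      Finset.sum_nonneg fun i hi => ((habar _ (Finset.mem_filter.1 hi).2).2 t ht).le
    have h2 : 0 ≤ ∑ k ∈ Finset.univ.filter (fun k : V => (j, k) ∈ E), aund (j, k) t :=
      Finset.sum_nonneg fun i hi => ((haund _ (Finset.mem_filter.1 hi).2).2 t ht).le
    rcases hE_inc j with ⟨i, hi⟩ | ⟨k, hk⟩
    · have : 0 < ∑ i ∈ Finset.univ.filter (fun i : V => (i, j) ∈ E), abar (i, j) t :=
        Finset.sum_pos (fun i hi => (habar _ (Finset.mem_filter.1 hi).2).2 t ht) ⟨i, by simpa using hi⟩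
      linarith
    · have : 0 < ∑ k ∈ Finset.univ.filter (fun k : V => (j, k) ∈ E), aund (j, k) t :=
        Finset.sum_pos (fun i hi => (haund _ (Finset.mem_filter.1 hi).2).2 t ht) ⟨k, by simpa using hk⟩
      linarith
  have hfm : ∀ e ∈ E, ∀ t ∈ Set.Icc (0:ℝ) T, ∀ u : ℝ, Monotone (fun w : ℝ => f e t u w) :=
    fun e he t ht u => (strictMono_of_deriv_pos (hf_incr e he t ht u)).monotone
  -- Kamke condition together with monotonicity in the injection
  have hkamke : ∀ t ∈ Set.Icc (0:ℝ) T, ∀ x y p r : V → ℝ, ∀ j : V, x ≤ y → x j = y j → p ≤ r →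
      g t x p j ≤ g t y r j := by
    intro t ht x y p r j hxy hj hpr
    rw [hg, hg, hj]
    have hAj := hApos j t ht
    have hc : 0 ≤ 2 / (ℓ * A j t) := by positivity
    refine sub_le_sub_right (mul_le_mul_of_nonneg_left ?_ hc) _
    refine add_le_add (sub_le_sub (Finset.sum_le_sum ?_) (Finset.sum_le_sum ?_)) (hpr j)
    · intro k hk
      have hk := (Finset.mem_filter.1 hk).2
      refine hfm _ hk t ht _ ?_
      have := mul_le_mul_of_nonneg_left (hxy k) ((habar _ hk).2 t ht).le
      gcongr
    · intro i hi
      have hi := (Finset.mem_filter.1 hi).2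
      refine hfm _ hi t ht _ ?_
      have := mul_le_mul_of_nonneg_left (hxy i) ((haund _ hi).2 t ht).le
      gcongr
  -- approximate comparison
  have happrox : ∀ ε > 0, ∀ t ∈ Set.Icc (0:ℝ) T, ∀ j,
      ρq t j - ρqhi t j ≤ ε * Real.exp ((K + 1) * t) := by
    intro ε hε
    set h : ℝ → V → ℝ := fun t j => ρq t j - ρqhi t j - ε * Real.exp ((K + 1) * t) with hh
    have hd : ∀ s ∈ Set.Icc (0:ℝ) T, ∀ j, HasDerivAt (fun t => h t j)
        (g s (ρq s) (q s) j - g s (ρqhi s) (qhi s) j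
          - ε * (Real.exp ((K + 1) * s) * (K + 1))) s := by
      intro s hs j
      have h1 := (hasDerivAt_pi.1 (hρq s hs)) j
      have h2 := (hasDerivAt_pi.1 (hρqhi s hs)) j
      have h3 : HasDerivAt (fun t : ℝ => ((K:ℝ) + 1) * t) ((K:ℝ) + 1) s := by
        simpa using (hasDerivAt_id s).const_mul ((K:ℝ) + 1)
      exact (h1.sub h2).sub (h3.exp.const_mul ε)
    have hcont : ContinuousOn h (Set.Icc 0 T) :=
      continuousOn_pi.2 fun j s hs => (hd s hs j).continuousAt.continuousWithinAt
    have hcl : IsClosed ((h ⁻¹' Set.Iic 0) ∩ Set.Icc 0 T) := by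
      rw [Set.inter_comm]
      exact hcont.preimage_isClosed_of_isClosed isClosed_Icc isClosed_Iic
    have hsub : Set.Icc 0 T ⊆ h ⁻¹' Set.Iic 0 := by
      refine hcl.Icc_subset_of_forall_exists_gt ?_ ?_
      · intro j
        simp [hh, h0q, h0qhi, hε.le]
      · rintro s ⟨hsS, hs⟩ y hy
        have hsI : s ∈ Set.Icc (0:ℝ) T := ⟨hs.1, hs.2.le⟩
        have key : ∀ j, ∀ᶠ z in nhdsWithin s (Set.Ioi s), h z j ≤ 0 := by
          intro j
          have hle : h s j ≤ 0 := hsS j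
          rcases hle.lt_or_eq with hlt | heq
          · exact ((hd s hsI j).continuousAt.eventually_lt continuousAt_const hlt).filter_mono
              nhdsWithin_le_nhds |>.mono fun z hz => hz.le
          · set δ := ε * Real.exp ((K + 1) * s) with hδ
            have hδpos : 0 < δ := by positivity
            have hg1 : g s (ρq s) (q s) j ≤ g s (fun k => ρqhi s k + δ) (qhi s) j := by
              refine hkamke s hsI _ _ _ _ j ?_ ?_ (hq s hsI).2
              · intro k
                have : h s k ≤ 0 := hsS k
                simp only [hh] at this
                show ρq s k ≤ ρqhi s k + δ
                linarith
              · simp only [hh] at heq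
                show ρq s j = ρqhi s j + δ
                linarith
            have hg2 : g s (fun k => ρqhi s k + δ) (qhi s) j - g s (ρqhi s) (qhi s) j ≤ K * δ := by
              have h1 := (hLip s hsI (qhi s)).dist_le_mul (fun k => ρqhi s k + δ) (ρqhi s)
              have h2 : dist (fun k => ρqhi s k + δ) (ρqhi s) ≤ δ := by
                refine (dist_pi_le_iff hδpos.le).2 fun k => ?_
                rw [Real.dist_eq]
                simp [abs_of_pos hδpos]
              have h3 := (dist_le_pi_dist (g s (fun k => ρqhi s k + δ) (qhi s))
                (g s (ρqhi s) (qhi s)) j)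
              rw [Real.dist_eq] at h3
              have h4 := mul_le_mul_of_nonneg_left h2 K.coe_nonneg
              exact (le_abs_self _).trans (h3.trans (h1.trans h4))
            have hneg : g s (ρq s) (q s) j - g s (ρqhi s) (qhi s) j
                - ε * (Real.exp ((K + 1) * s) * (K + 1)) < 0 := by
              have : ε * (Real.exp ((K + 1) * s) * (K + 1)) = K * δ + δ := by rw [hδ]; ring
              rw [this]; linarith
            have hsl := ((hd s hsI j).hasDerivWithinAt (s := Set.Ioi s)).limsup_slope_le'
              (by simp) hneg
            filter_upwards [hsl, self_mem_nhdsWithin] with z hz hzs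
            have hzs : 0 < z - s := sub_pos.2 hzs
            rw [slope_def_field, heq, sub_zero] at hz
            by_contra hcon
            push Not at hcon
            exact absurd (div_pos hcon hzs) (not_lt.2 hz.le)
        have hall : ∀ᶠ z in nhdsWithin s (Set.Ioi s), ∀ j, h z j ≤ 0 := Filter.eventually_all.2 key
        have hmem : ∀ᶠ z in nhdsWithin s (Set.Ioi s), z ∈ Set.Ioc s y := Ioc_mem_nhdsGT hy
        obtain ⟨z, hz1, hz2⟩ := (hall.and hmem).exists
        exact ⟨z, hz1, hz2⟩
    intro t ht j
    have : h t j ≤ 0 := hsub ht j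
    simp only [hh] at this
    linarith
  have hcomp : ∀ t ∈ Set.Icc (0:ℝ) T, ρq t ≤ ρqhi t := by
    intro t ht j
    refine le_of_forall_pos_le_add fun η hη => ?_
    have hp := Real.exp_pos (((K:ℝ) + 1) * t)
    have := happrox (η / Real.exp ((K + 1) * t)) (by positivity) t ht j
    rw [div_mul_cancel₀ _ hp.ne'] at this
    linarith
  exact setIntegral_mono_on hint_q hint_qhi measurableSet_Icc
    fun t ht => hLmono t ht _ _ (hcomp t ht)
end
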